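/- For all natural numbers m, n, the product of Legendre polynomials has the linearization L_m(x)·L_n(x) = Σ_{s=0}^{min(m,n)} [(m+n+1/2−2s)/(m+n+1/2−s)] · [C_s·C_{m−s}·C_{n−s}/C_{m+n−s}] · L_{m+n−2s}(x), where C_r := (2r)!/(2^r · r! · r! · 2^r)·2^r, i.e., C_r = (1·3·…·(2r−1))/(r!·2^r) with C_0 = 1. -/

import Mathlib

/-!
The formula is proved by induction on `m`, using the three-term recurrence twice: once to write
`(m+1) L_{m+1} L_n = (2m+1) x L_m L_n - m L_{m-1} L_n`, and once to expand each `x L_k` that arises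
from the linearization of `L_m L_n` as `((k+1) L_{k+1} + k L_{k-1}) / (2k+1)`. Comparing the
coefficients of `L_{m+1+n-2s}` leaves a four-term rational identity between the linearization
coefficients (`linCoef_rec`), which follows from `2 (r+1) C_{r+1} = (2r+1) C_r`.

To avoid boundary terms, `L` and `C` are extended by zero to negative integer indices
(`legendreZ`, `CcoefZ`). The three-term recurrence then holds at every integer index, the
coefficients vanish automatically outside `0 ≤ s ≤ min m n`, and the sum may be taken over any longer
range of `s`.
-/

open Polynomial MeasureTheory intervalIntegral Finset

/-- The `n`-th Legendre polynomial, defined by `L_0 = 1`, `L_1 = X`, and the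
three-term recurrence `(n+1) L_{n+1} = (2n+1) X L_n - n L_{n-1}`. -/
noncomputable def legendre : ℕ → Polynomial ℝ
  | 0 => 1
  | 1 => Polynomial.X
  | (n+2) =>
      Polynomial.C ((2*(n:ℝ)+3)/((n:ℝ)+2)) * (Polynomial.X * legendre (n+1))
        - Polynomial.C (((n:ℝ)+1)/((n:ℝ)+2)) * legendre n

/-- The Legendre–Galerkin Dirichlet basis function `φ_k = L_k - L_{k+2}`. -/
noncomputable def phi (k : ℕ) : Polynomial ℝ := legendre k - legendre (k+2)

/-- `C_r = (1·3·…·(2r-1)) / (r! · 2^r)`, with `C_0 = 1`. -/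
noncomputable def Ccoef (r : ℕ) : ℝ :=
  (∏ i ∈ Finset.range r, (2*(i:ℝ)+1)) / ((r.factorial : ℝ) * 2^r)

/-- The value `L_k(x)`, extended by `0` to negative indices `k`. -/
noncomputable def legendreZ (x : ℝ) (k : ℤ) : ℝ :=
  if 0 ≤ k then (legendre k.toNat).eval x else 0

/-- The coefficient `C_r`, extended by `0` to negative indices `r`. -/
noncomputable def CcoefZ (r : ℤ) : ℝ := if 0 ≤ r then Ccoef r.toNat else 0

/-- The coefficient of `L_{m+n-2s}` in `L_m L_n`, for arbitrary integer indices. -/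
noncomputable def linCoef (m n s : ℤ) : ℝ :=
  (((m:ℝ)+(n:ℝ)+1/2-2*(s:ℝ))/((m:ℝ)+(n:ℝ)+1/2-(s:ℝ))) *
    (CcoefZ s * CcoefZ (m-s) * CcoefZ (n-s) / CcoefZ (m+n-s))

lemma legendreZ_natCast (x : ℝ) (k : ℕ) : legendreZ x k = (legendre k).eval x := by
  simp [legendreZ]

lemma legendreZ_of_neg (x : ℝ) {k : ℤ} (h : k < 0) : legendreZ x k = 0 := by
  simp [legendreZ, h]

lemma CcoefZ_natCast (r : ℕ) : CcoefZ r = Ccoef r := by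
  simp [CcoefZ]

lemma CcoefZ_of_neg {r : ℤ} (h : r < 0) : CcoefZ r = 0 := by
  simp [CcoefZ, h]

lemma Ccoef_zero : Ccoef 0 = 1 := by simp [Ccoef]

lemma Ccoef_succ (r : ℕ) : Ccoef (r+1) = Ccoef r * ((2*(r:ℝ)+1)/(2*((r:ℝ)+1))) := by
  have : (r.factorial : ℝ) ≠ 0 := by exact_mod_cast r.factorial_ne_zero
  have : (r:ℝ)+1 ≠ 0 := by positivity
  simp only [Ccoef, Finset.prod_range_succ, Nat.factorial_succ, pow_succ]
  push_cast
  field_simp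

lemma Ccoef_ne_zero (r : ℕ) : Ccoef r ≠ 0 := by
  have : 0 < Ccoef r := by
    unfold Ccoef
    exact div_pos (Finset.prod_pos fun i _ => by positivity) (by positivity)
  exact this.ne'

lemma two_mul_intCast_add_one_ne_zero (k : ℤ) : 2*(k:ℝ)+1 ≠ 0 := by
  have : (2*k+1 : ℤ) ≠ 0 := by omega
  exact_mod_cast this

lemma legendreZ_rec (x : ℝ) (k : ℤ) :
    (2*(k:ℝ)+1) * (x * legendreZ x k)
      = ((k:ℝ)+1) * legendreZ x (k+1) + k * legendreZ x (k-1) := by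
  rcases lt_or_ge k 0 with h | h
  · rw [legendreZ_of_neg x h, legendreZ_of_neg x (show k-1 < 0 by omega)]
    rcases eq_or_ne k (-1) with rfl | h1
    · simp
    · rw [legendreZ_of_neg x (show k+1 < 0 by omega)]
      simp
  · lift k to ℕ using h
    rcases k with _ | k
    · have h1 := legendreZ_natCast x 1
      have h0 := legendreZ_natCast x 0
      simp only [Nat.cast_one, Nat.cast_zero] at h1 h0
      simp [h0, h1, legendre]
    · rw [show (((k+1 : ℕ) : ℤ)+1) = ((k+2 : ℕ) : ℤ) by push_cast; ring,
        show (((k+1 : ℕ) : ℤ)-1) = (k : ℤ) by push_cast; ring]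
      simp only [legendreZ_natCast]
      rw [legendre.eq_3]
      have : (k:ℝ)+2 ≠ 0 := by positivity
      simp only [eval_sub, eval_mul, eval_C, eval_X]
      push_cast
      field_simp
      ring

lemma linCoef_of_neg {m n s : ℤ} (h : s < 0) : linCoef m n s = 0 := by
  simp [linCoef, CcoefZ_of_neg h]

lemma linCoef_of_lt_left {m n s : ℤ} (h : m < s) : linCoef m n s = 0 := by
  simp [linCoef, CcoefZ_of_neg (show m - s < 0 by omega)]

lemma linCoef_of_lt_right {m n s : ℤ} (h : n < s) : linCoef m n s = 0 := by
  simp [linCoef, CcoefZ_of_neg (show n - s < 0 by omega)]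

/-- `linCoef` in the coordinates `s`, `p = m - s`, `q = n - s`, in which all indices are natural. -/
lemma linCoef_eq {m n s : ℤ} (t p q : ℕ) (hs : s = t) (hm : m = t + p) (hn : n = t + q) :
    linCoef m n s = (((p:ℝ)+q+1/2)/((t:ℝ)+p+q+1/2)) *
      (Ccoef t * Ccoef p * Ccoef q / Ccoef (t+p+q)) := by
  subst hs hm hn
  unfold linCoef
  rw [show (t:ℤ)+p-t = (p:ℕ) by ring, show (t:ℤ)+q-t = (q:ℕ) by ring,
    show (t:ℤ)+p+(t+q)-t = ((t+p+q : ℕ):ℤ) by push_cast; ring]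
  simp only [CcoefZ_natCast]
  push_cast
  congr 2 <;> ring

/-- The coefficient identity behind the induction: both sides are the coefficient of
`L_{m+1+n-2s}` in `(m+1) L_{m+1} L_n`. -/
lemma linCoef_rec (m n s : ℕ) :
    ((m:ℝ)+1) * linCoef (m+1) n s =
      (2*(m:ℝ)+1) *
        (linCoef m n s * ((((m+n-2*s : ℤ):ℝ)+1)/(2*((m+n-2*s : ℤ):ℝ)+1))
          + linCoef m n (s-1) * (((m+n-2*(s-1) : ℤ):ℝ)/(2*((m+n-2*(s-1) : ℤ):ℝ)+1)))
      - m * linCoef (m-1) n (s-1) := by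
  rcases s with _ | t
  · rw [linCoef_of_neg (s := ((0:ℕ):ℤ)-1) (by simp),
      linCoef_of_neg (s := ((0:ℕ):ℤ)-1) (by simp),
      linCoef_eq 0 (m+1) n (by simp) (by simp) (by simp),
      linCoef_eq 0 m n (by simp) (by simp) (by simp)]
    rw [show 0 + (m+1) + n = (m+n)+1 by ring, show 0 + m + n = m+n by ring]
    simp only [Ccoef_succ]
    have := Ccoef_ne_zero (m+n)
    push_cast
    simp only [mul_zero, sub_zero, zero_add]
    field_simp
    ring
  · rw [show (((t+1:ℕ):ℤ)-1) = t by push_cast; ring]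
    rcases lt_or_ge m t with h | hm
    · rw [linCoef_of_lt_left, linCoef_of_lt_left, linCoef_of_lt_left, linCoef_of_lt_left]
      · simp
      all_goals (push_cast; omega)
    rcases lt_or_ge n t with h | hn
    · rw [linCoef_of_lt_right, linCoef_of_lt_right, linCoef_of_lt_right, linCoef_of_lt_right]
      · simp
      all_goals (push_cast; omega)
    obtain ⟨p, rfl⟩ := Nat.exists_eq_add_of_le hm
    obtain ⟨q, rfl⟩ := Nat.exists_eq_add_of_le hn
    have hC := Ccoef_ne_zero
    rcases p with _ | p <;> rcases q with _ | q
    · rw [linCoef_of_lt_right (s := ((t+1:ℕ):ℤ)) (by push_cast; omega),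
        linCoef_of_lt_right (s := ((t+1:ℕ):ℤ)) (by push_cast; omega),
        linCoef_of_lt_left (m := ((t+0:ℕ):ℤ)-1) (by push_cast; omega)]
      push_cast
      ring
    · rw [linCoef_of_lt_left (m := ((t+0:ℕ):ℤ)) (s := ((t+1:ℕ):ℤ)) (by push_cast; omega),
        linCoef_of_lt_left (m := ((t+0:ℕ):ℤ)-1) (by push_cast; omega),
        linCoef_eq (t+1) 0 q (by simp) (by push_cast; ring) (by push_cast; ring),
        linCoef_eq t 0 (q+1) (by simp) (by push_cast; ring) (by push_cast; ring)]
      rw [show t+1+0+q = t+q+1 by ring, show t+0+(q+1) = t+q+1 by ring]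
      simp only [Ccoef_succ, Ccoef_zero]
      have := hC (t+q)
      push_cast
      rw [show (t:ℝ)+0+(t+(q+1))-2*t = q+1 by ring]
      field_simp
      ring
    · rw [linCoef_of_lt_right (s := ((t+1:ℕ):ℤ)) (by push_cast; omega),
        linCoef_of_lt_right (s := ((t+1:ℕ):ℤ)) (by push_cast; omega),
        linCoef_eq t (p+1) 0 (by simp) (by push_cast; ring) (by push_cast; ring),
        linCoef_eq t p 0 (by simp) (by push_cast; ring) (by push_cast; ring)]
      rw [show t+(p+1)+0 = t+p+1 by ring, show t+p+0 = t+p by ring]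
      simp only [Ccoef_succ, Ccoef_zero]
      have := hC (t+p)
      push_cast
      rw [show (t:ℝ)+(p+1)+(t+0)-2*t = p+1 by ring]
      field_simp
      ring
    · rw [linCoef_eq (t+1) (p+1) q (by simp) (by push_cast; ring) (by push_cast; ring),
        linCoef_eq (t+1) p q (by simp) (by push_cast; ring) (by push_cast; ring),
        linCoef_eq t (p+1) (q+1) (by simp) (by push_cast; ring) (by push_cast; ring),
        linCoef_eq t p (q+1) (by simp) (by push_cast; ring) (by push_cast; ring)]
      rw [show t+1+(p+1)+q = t+p+q+1+1 by ring, show t+1+p+q = t+p+q+1 by ring,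
        show t+(p+1)+(q+1) = t+p+q+1+1 by ring, show t+p+(q+1) = t+p+q+1 by ring]
      simp only [Ccoef_succ]
      have := hC (t+p+q)
      push_cast
      rw [show (t:ℝ)+(p+1)+(t+(q+1))-2*(t+1) = p+q by ring,
        show (t:ℝ)+(p+1)+(t+(q+1))-2*t = p+q+2 by ring]
      field_simp
      ring

/-- The linearization formula with zero-extended coefficients, over any sufficiently long range;
the freedom in `N` lets the sums for `m + 1`, `m` and `m - 1` be compared term by term. -/
lemma legendreZ_mul (x : ℝ) (n m : ℕ) : ∀ N : ℕ, m < N →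
    legendreZ x m * legendreZ x n
      = ∑ s ∈ range N, linCoef m n s * legendreZ x (m+n-2*s) := by
  induction m using Nat.strong_induction_on with
  | _ m ih =>
  intro N hN
  rcases m with _ | m
  · rw [Finset.sum_eq_single_of_mem 0 (by simpa using hN)]
    · rw [linCoef_eq 0 0 n (by simp) (by simp) (by simp), legendreZ_natCast x 0]
      have := Ccoef_ne_zero n
      have : (n:ℝ)+1/2 ≠ 0 := by positivity
      simp only [legendre, eval_one, Ccoef_zero, Nat.cast_zero, zero_add, one_mul, mul_zero, sub_zero]
      rw [div_self ‹_›, div_self ‹_›]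
      ring
    · intro s _ hs
      rw [linCoef_of_lt_left (by push_cast; omega), zero_mul]
  · obtain ⟨M, rfl⟩ : ∃ M, N = M + 1 := ⟨N - 1, by omega⟩
    have ih1 := ih m (by omega) M (by omega)
    -- The factor `m` removes the case `m = 0`, where no product with index `m - 1` is available.
    have ih2 : (m:ℝ) * (legendreZ x (m-1) * legendreZ x n)
        = ∑ s ∈ range M, m * linCoef (m-1) n s * legendreZ x (m-1+n-2*s) := by
      rcases m with _ | k
      · simp
      · have := ih k (by omega) M (by omega)
        rw [show (((k+1:ℕ):ℤ)-1) = k by push_cast; ring, this, Finset.mul_sum]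
        exact Finset.sum_congr rfl fun s _ => by ring
    have hm1 : (m:ℝ)+1 ≠ 0 := by positivity
    apply mul_left_cancel₀ hm1
    have hrec := legendreZ_rec x m
    simp only [Int.cast_natCast] at hrec
    have hL : ((m:ℝ)+1) * (legendreZ x ((m+1:ℕ):ℤ) * legendreZ x n)
        = (2*(m:ℝ)+1) * (x * (legendreZ x m * legendreZ x n))
          - m * (legendreZ x (m-1) * legendreZ x n) := by
      push_cast
      linear_combination (-legendreZ x n) * hrec
    have hx : x * (legendreZ x m * legendreZ x n)
        = ∑ s ∈ range M, (linCoef m n s *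
            ((((m+n-2*s : ℤ):ℝ)+1)/(2*((m+n-2*s : ℤ):ℝ)+1)) * legendreZ x (m+n-2*s+1)
          + linCoef m n s *
            (((m+n-2*s : ℤ):ℝ)/(2*((m+n-2*s : ℤ):ℝ)+1)) * legendreZ x (m+n-2*s-1)) := by
      rw [ih1, Finset.mul_sum]
      refine Finset.sum_congr rfl fun s _ => ?_
      have h0 := two_mul_intCast_add_one_ne_zero (m+n-2*s)
      have h1 := legendreZ_rec x (m+n-2*s)
      have hI := mul_inv_cancel₀ h0
      simp only [div_eq_mul_inv]
      linear_combination (linCoef m n s * (2*((m+n-2*s : ℤ):ℝ)+1)⁻¹) * h1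
        - linCoef m n s * x * legendreZ x (m+n-2*s) * hI
    rw [hL, hx, ih2, Finset.sum_add_distrib, Finset.mul_sum]
    -- The sum of the `L_{k+1}` terms extends by a zero term at `s = M`, the other two sums shift
    -- by one and extend by a zero term at `s = 0`.
    have e1 : ∑ s ∈ range M, linCoef m n s *
            ((((m+n-2*s : ℤ):ℝ)+1)/(2*((m+n-2*s : ℤ):ℝ)+1)) * legendreZ x (m+n-2*s+1)
        = ∑ s ∈ range (M+1), linCoef m n s *
            ((((m+n-2*s : ℤ):ℝ)+1)/(2*((m+n-2*s : ℤ):ℝ)+1)) * legendreZ x (m+n-2*s+1) := by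
      rw [Finset.sum_range_succ, linCoef_of_lt_left (m := m) (s := M) (by omega)]
      simp
    have shift : ∀ f : ℤ → ℝ, f (-1) = 0 →
        ∑ s ∈ range M, f s = ∑ s ∈ range (M+1), f ((s:ℤ)-1) := by
      intro f hf
      rw [Finset.sum_range_succ']
      simp [hf]
    have e2 := shift (fun s => linCoef m n s *
            (((m+n-2*s : ℤ):ℝ)/(2*((m+n-2*s : ℤ):ℝ)+1)) * legendreZ x (m+n-2*s-1))
        (by simp [linCoef_of_neg])
    have e3 := shift (fun s => m * linCoef (m-1) n s * legendreZ x (m-1+n-2*s))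
        (by simp [linCoef_of_neg])
    rw [e1, e2, e3, ← Finset.sum_add_distrib, Finset.mul_sum, ← Finset.sum_sub_distrib]
    refine Finset.sum_congr rfl fun s _ => ?_
    have hc := linCoef_rec m n s
    rw [show (m:ℤ)+n-2*(s-1)-1 = ((m+1:ℕ):ℤ)+n-2*s by push_cast; ring,
      show (m:ℤ)-1+n-2*(s-1) = ((m+1:ℕ):ℤ)+n-2*s by push_cast; ring,
      show (m:ℤ)+n-2*s+1 = ((m+1:ℕ):ℤ)+n-2*s by push_cast; ring,
      show (((m+1:ℕ):ℤ)) = (m:ℤ)+1 by push_cast; ring]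
    linear_combination (-legendreZ x ((m:ℤ)+1+n-2*s)) * hc

theorem legendre_linearization (m n : ℕ) (x : ℝ) :
    (legendre m).eval x * (legendre n).eval x =
      ∑ s ∈ Finset.range (min m n + 1),
        (((m:ℝ)+(n:ℝ)+1/2-2*(s:ℝ))/((m:ℝ)+(n:ℝ)+1/2-(s:ℝ))) *
          (Ccoef s * Ccoef (m-s) * Ccoef (n-s) / Ccoef (m+n-s)) *
          (legendre (m+n-2*s)).eval x := by
  have h := legendreZ_mul x n m (m+1) (by omega)
  rw [legendreZ_natCast, legendreZ_natCast] at h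
  rw [h]
  have hsub : Finset.range (min m n + 1) ⊆ Finset.range (m+1) := by
    intro s
    simp only [Finset.mem_range]
    omega
  rw [← Finset.sum_subset hsub]
  · refine Finset.sum_congr rfl fun s hs => ?_
    rw [Finset.mem_range] at hs
    rw [show (m:ℤ)+n-2*s = ((m+n-2*s:ℕ):ℤ) by omega, legendreZ_natCast]
    unfold linCoef
    rw [show (m:ℤ)-s = ((m-s:ℕ):ℤ) by omega, show (n:ℤ)-s = ((n-s:ℕ):ℤ) by omega,
      show (m:ℤ)+n-s = ((m+n-s:ℕ):ℤ) by omega]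
    simp only [CcoefZ_natCast, Int.cast_natCast]
  · intro s hs hs'
    simp only [Finset.mem_range] at hs hs'
    rw [linCoef_of_lt_right (by omega), zero_mul]
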